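/- Weakening (from X[Y] infer X[Y, Z]), contraction (from X[Y, Y] infer X[Y]), and the display rules (rf) (from X, ∘{Y} infer •{X}, Y) and (rp) (from X, •{Y} infer ∘{X}, Y) are admissible in DKT + DeepPr(P) for any set P of path axioms: whenever the premise of such a rule is derivable in DKT + DeepPr(P), so is its conclusion. -/

import Mathlib

/-!
All four rules are instances of one fact: derivability in `DKT + DeepPr(P)` is preserved along
homomorphisms of nested sequents. The tree of `X` may be mapped into the tree of `X'` by any map
of nodes that sends `∘`- and `•`-edges to edges of the same orientation, whatever the roots are, and
that sends each formula at a node to a formula *covered* at the image node (`Cov`): either it occurs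
there, or its components do as after an application of the invertible rules for `∨`, `∧`, `□`, `■`.
If such a map exists (`Emb`) and `X` is derivable, then `X'` is derivable (`DKT.of_emb`).

The proof is by induction on the derivation of `X`. If the principal formula occurs at its image in
`X'`, the same rule is applied there; the premises of that rule still cover everything that was
covered before (`LabT.replace`), so no contraction is needed. If it is covered only through its
components, the induction hypothesis applies to `X'` itself. Formulae `◇A` and `◆A` are covered only
by occurring, and homomorphisms preserve paths in propagation graphs, so a propagation rule is
copied to a propagation rule (`propagate`). The rules `◆₁`, `◆₂`, `◇₁`, `◇₂` are propagation along
paths of length one: their images are handled in the same way because `◇A → ◇A` and `◆A → ◆A`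
belong to every completion.

Weakening then comes from an inclusion, contraction from the map that folds the two copies of `Y`
together, and the display rules from moving the root to the neighbouring node.
-/

set_option autoImplicit false

/-! # Common definitions: tense logics, nested/labeled/display calculi
    (following Ciabattoni, Lyon, Ramanayake, Tiu,
     "Display to Labeled Proofs and Back Again for Tense Logics") -/

/-- Diamonds: `wd` = ◇ (white diamond), `bd` = ◆ (black diamond). -/
inductive Dmd : Type
  | wd
  | bd
deriving DecidableEq, Repr

/-- Tense formulae in negation normal form:
    `A ::= p | p̄ | A ∧ A | A ∨ A | □A | ◇A | ■A | ◆A`. -/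
inductive Formula : Type
  | pos : Nat → Formula      -- propositional variable p
  | neg : Nat → Formula      -- negated propositional variable p̄
  | and : Formula → Formula → Formula
  | or : Formula → Formula → Formula
  | box : Formula → Formula   -- □
  | dia : Formula → Formula   -- ◇
  | bbox : Formula → Formula  -- ■
  | bdia : Formula → Formula  -- ◆
deriving DecidableEq, Repr

/-- The De Morgan dual `Ā` of a formula `A`. -/
def Formula.dual : Formula → Formula
  | .pos p => .neg p
  | .neg p => .pos p
  | .and A B => .or A.dual B.dual
  | .or A B => .and A.dual B.dual
  | .box A => .dia A.dual
  | .dia A => .box A.dual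
  | .bbox A => .bdia A.dual
  | .bdia A => .bbox A.dual

/-- `A → B` is defined as `Ā ∨ B`. -/
def Formula.imp (A B : Formula) : Formula := A.dual.or B

/-- `A ↔ B` is defined as `(A → B) ∧ (B → A)`. -/
def Formula.iffF (A B : Formula) : Formula := (A.imp B).and (B.imp A)

/-- `⟨?⟩A` for a diamond `⟨?⟩ ∈ {◇, ◆}`. -/
def dmdF : Dmd → Formula → Formula
  | .wd, A => .dia A
  | .bd, A => .bdia A

/-- `⟨?⟩₁…⟨?⟩ₘ A` for a string of diamonds. -/
def applyDmds : List Dmd → Formula → Formula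
  | [], A => A
  | d :: ds, A => dmdF d (applyDmds ds A)

/-- A general path axiom `ΠA → ΣA`, given by the strings `Π` (ant) and `Σ` (suc). -/
structure GenPath : Type where
  ant : List Dmd
  suc : List Dmd

/-- A path axiom `ΠA → ⟨?⟩A`. -/
structure PathAx : Type where
  ant : List Dmd
  suc : Dmd
deriving DecidableEq

/-- Every path axiom is a general path axiom. -/
def pathToGen (F : PathAx) : GenPath := ⟨F.ant, [F.suc]⟩

/-- All instances `ΠA → ΣA` of the general path axioms in `GP`. -/
def gpInstances (GP : Set GenPath) : Set Formula :=
  {F | ∃ gp ∈ GP, ∃ A : Formula, F = (applyDmds gp.ant A).imp (applyDmds gp.suc A)}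

/-- The Hilbert system `Kt + S`: classical propositional axioms, modus ponens,
    the tense axioms, and necessitation for □ and ■, plus the axioms in `S`. -/
inductive KtProof (S : Set Formula) : Formula → Prop
  | ax {A : Formula} : A ∈ S → KtProof S A
  | pl1 (A B : Formula) : KtProof S (A.imp (B.imp A))
  | pl2 (A B : Formula) : KtProof S ((B.dual.imp A.dual).imp (A.imp B))
  | pl3 (A B C : Formula) :
      KtProof S ((A.imp (B.imp C)).imp ((A.imp B).imp (A.imp C)))
  | tense1 (A : Formula) : KtProof S (A.imp (Formula.box (Formula.bdia A)))
  | tense2 (A : Formula) : KtProof S (A.imp (Formula.bbox (Formula.dia A)))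
  | kbox (A B : Formula) :
      KtProof S ((Formula.box (A.imp B)).imp ((Formula.box A).imp (Formula.box B)))
  | kbbox (A B : Formula) :
      KtProof S ((Formula.bbox (A.imp B)).imp ((Formula.bbox A).imp (Formula.bbox B)))
  | boxdual (A : Formula) :
      KtProof S ((Formula.box A).iffF (Formula.dia A.dual).dual)
  | bboxdual (A : Formula) :
      KtProof S ((Formula.bbox A).iffF (Formula.bdia A.dual).dual)
  | mp {A B : Formula} : KtProof S (A.imp B) → KtProof S A → KtProof S B
  | necbox {A : Formula} : KtProof S A → KtProof S (Formula.box A)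
  | necbbox {A : Formula} : KtProof S A → KtProof S (Formula.bbox A)

/-! ## Nested sequents -/

/-- Nested sequents: `X ::= ε | A | X, X | ∘{X} | •{X}`. -/
inductive NSeq : Type
  | empty
  | fml : Formula → NSeq
  | comma : NSeq → NSeq → NSeq
  | white : NSeq → NSeq   -- ∘{X}
  | black : NSeq → NSeq   -- •{X}
deriving DecidableEq, Repr

/-- Comma is associative and commutative with unit ε: the induced congruence. -/
inductive NEquiv : NSeq → NSeq → Prop
  | refl (X : NSeq) : NEquiv X X
  | symm {X Y : NSeq} : NEquiv X Y → NEquiv Y X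
  | trans {X Y Z : NSeq} : NEquiv X Y → NEquiv Y Z → NEquiv X Z
  | comm (X Y : NSeq) : NEquiv (X.comma Y) (Y.comma X)
  | assoc (X Y Z : NSeq) : NEquiv ((X.comma Y).comma Z) (X.comma (Y.comma Z))
  | unit (X : NSeq) : NEquiv (X.comma NSeq.empty) X
  | commaCongr {X X' Y Y' : NSeq} :
      NEquiv X X' → NEquiv Y Y' → NEquiv (X.comma Y) (X'.comma Y')
  | whiteCongr {X Y : NSeq} : NEquiv X Y → NEquiv X.white Y.white
  | blackCongr {X Y : NSeq} : NEquiv X Y → NEquiv X.black Y.black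

/-- `★₁{… ★ₙ{Y} …}` where `★ⱼ = ∘` if `⟨?⟩ⱼ = ◇` and `★ⱼ = •` if `⟨?⟩ⱼ = ◆`. -/
def nestDmds : List Dmd → NSeq → NSeq
  | [], Y => Y
  | .wd :: ds, Y => (nestDmds ds Y).white
  | .bd :: ds, Y => (nestDmds ds Y).black

/-- The structural rules `NestSt(GP)` (premise, conclusion): for each
    `ΠA → ΣA ∈ GP`, from `X, ★Σ{Y}` infer `X, ★Π{Y}`. -/
def NestSt (GP : Set GenPath) : NSeq → NSeq → Prop :=
  fun prem concl => ∃ gp ∈ GP, ∃ X Y : NSeq,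
    prem = X.comma (nestDmds gp.suc Y) ∧ concl = X.comma (nestDmds gp.ant Y)

/-- The empty set of extension rules on nested sequents. -/
def NoNest : NSeq → NSeq → Prop := fun _ _ => False

/-- The shallow nested (display) calculus `SKT` extended with the
    structural rules `Ext` (relating premise to conclusion); nested sequents are
    treated up to the congruence `NEquiv` (comma is AC with unit ε). -/
inductive SKT (Ext : NSeq → NSeq → Prop) : NSeq → Prop
  | id (X : NSeq) (p : Nat) :
      SKT Ext ((X.comma (.fml (.pos p))).comma (.fml (.neg p)))
  | orR {X : NSeq} {A B : Formula} :
      SKT Ext (X.comma ((NSeq.fml A).comma (.fml B))) →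
      SKT Ext (X.comma (.fml (.or A B)))
  | andR {X : NSeq} {A B : Formula} :
      SKT Ext (X.comma (.fml A)) → SKT Ext (X.comma (.fml B)) →
      SKT Ext (X.comma (.fml (.and A B)))
  | ctr {X Y : NSeq} : SKT Ext (X.comma (Y.comma Y)) → SKT Ext (X.comma Y)
  | wk {X Y : NSeq} : SKT Ext X → SKT Ext (X.comma Y)
  | rf {X Y : NSeq} : SKT Ext (X.comma Y.white) → SKT Ext (X.black.comma Y)
  | rp {X Y : NSeq} : SKT Ext (X.comma Y.black) → SKT Ext (X.white.comma Y)
  | bbox {X : NSeq} {A : Formula} :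
      SKT Ext (X.comma (NSeq.fml A).black) → SKT Ext (X.comma (.fml (.bbox A)))
  | box {X : NSeq} {A : Formula} :
      SKT Ext (X.comma (NSeq.fml A).white) → SKT Ext (X.comma (.fml (.box A)))
  | bdia {X Y : NSeq} {A : Formula} :
      SKT Ext ((X.comma (Y.comma (.fml A)).black).comma (.fml (.bdia A))) →
      SKT Ext ((X.comma Y.black).comma (.fml (.bdia A)))
  | dia {X Y : NSeq} {A : Formula} :
      SKT Ext ((X.comma (Y.comma (.fml A)).white).comma (.fml (.dia A))) →
      SKT Ext ((X.comma Y.white).comma (.fml (.dia A)))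
  | ext {X Y : NSeq} : Ext X Y → SKT Ext X → SKT Ext Y
  | equiv {X Y : NSeq} : SKT Ext X → NEquiv X Y → SKT Ext Y

/-! ## Deep nested calculus -/

/-- One-hole contexts over nested sequents (up to `NEquiv` this suffices). -/
inductive Ctx : Type
  | hole
  | commaL : Ctx → NSeq → Ctx
  | white : Ctx → Ctx
  | black : Ctx → Ctx

/-- Filling the hole of a context with a nested sequent. -/
def Ctx.fill : Ctx → NSeq → NSeq
  | .hole, X => X
  | .commaL C Y, X => (C.fill X).comma Y
  | .white C, X => (C.fill X).white
  | .black C, X => (C.fill X).black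

/-- The deep nested calculus `DKT` extended with rules `Ext`
    (premise, conclusion); sequents are treated up to `NEquiv`. -/
inductive DKT (Ext : NSeq → NSeq → Prop) : NSeq → Prop
  | id (C : Ctx) (p : Nat) :
      DKT Ext (C.fill ((NSeq.fml (.pos p)).comma (.fml (.neg p))))
  | andD {C : Ctx} {Y : NSeq} {A B : Formula} :
      DKT Ext (C.fill ((NSeq.fml A).comma Y)) →
      DKT Ext (C.fill ((NSeq.fml B).comma Y)) →
      DKT Ext (C.fill ((NSeq.fml (.and A B)).comma Y))
  | orD {C : Ctx} {Y : NSeq} {A B : Formula} :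
      DKT Ext (C.fill ((NSeq.fml A).comma ((NSeq.fml B).comma Y))) →
      DKT Ext (C.fill ((NSeq.fml (.or A B)).comma Y))
  | bboxD {C : Ctx} {A : Formula} :
      DKT Ext (C.fill ((NSeq.fml (.bbox A)).comma (NSeq.fml A).black)) →
      DKT Ext (C.fill (.fml (.bbox A)))
  | boxD {C : Ctx} {A : Formula} :
      DKT Ext (C.fill ((NSeq.fml (.box A)).comma (NSeq.fml A).white)) →
      DKT Ext (C.fill (.fml (.box A)))
  | bdia1 {C : Ctx} {Y : NSeq} {A : Formula} :
      DKT Ext (C.fill ((Y.comma (.fml A)).black.comma (.fml (.bdia A)))) →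
      DKT Ext (C.fill (Y.black.comma (.fml (.bdia A))))
  | bdia2 {C : Ctx} {Y : NSeq} {A : Formula} :
      DKT Ext (C.fill ((Y.comma (.fml (.bdia A))).white.comma (.fml A))) →
      DKT Ext (C.fill ((Y.comma (.fml (.bdia A))).white))
  | dia1 {C : Ctx} {Y : NSeq} {A : Formula} :
      DKT Ext (C.fill ((Y.comma (.fml A)).white.comma (.fml (.dia A)))) →
      DKT Ext (C.fill (Y.white.comma (.fml (.dia A))))
  | dia2 {C : Ctx} {Y : NSeq} {A : Formula} :
      DKT Ext (C.fill ((Y.comma (.fml (.dia A))).black.comma (.fml A))) →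
      DKT Ext (C.fill ((Y.comma (.fml (.dia A))).black))
  | ext {X Y : NSeq} : Ext X Y → DKT Ext X → DKT Ext Y
  | equiv {X Y : NSeq} : DKT Ext X → NEquiv X Y → DKT Ext Y

/-! ## Display rules and display equivalence -/

/-- `DisplayDeriv X Z`: `Z` is derivable from `X` using only the display rules
    (rf) and (rp) (and rearrangement by the comma-congruence `NEquiv`). -/
inductive DisplayDeriv : NSeq → NSeq → Prop
  | refl (X : NSeq) : DisplayDeriv X X
  | equiv {X Y Z : NSeq} : NEquiv X Y → DisplayDeriv Y Z → DisplayDeriv X Z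
  | rf {X Y Z : NSeq} :
      DisplayDeriv (X.black.comma Y) Z → DisplayDeriv (X.comma Y.white) Z
  | rp {X Y Z : NSeq} :
      DisplayDeriv (X.white.comma Y) Z → DisplayDeriv (X.comma Y.black) Z

/-- Two nested sequents are display equivalent when each is derivable from the
    other using only the display rules. -/
def DisplayEquiv (X Y : NSeq) : Prop := DisplayDeriv X Y ∧ DisplayDeriv Y X

/-! ## Labeled sequents and the labeled calculus G3Kt -/

abbrev Label : Type := Nat

/-- A set of relational atoms `Rxy`. -/
abbrev RelSet : Type := Finset (Label × Label)

/-- A labeled sequent `R, Γ`. -/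
abbrev LSeq : Type := RelSet × Multiset (Label × Formula)

/-- The label `z` occurs in the labeled sequent `S`. -/
def occursLS (z : Label) (S : LSeq) : Prop :=
  (∃ w, (z, w) ∈ S.1 ∨ (w, z) ∈ S.1) ∨ ∃ A, (z, A) ∈ S.2

/-- `R_◇ x y := Rxy` and `R_◆ x y := Ryx`. -/
def relAtom : Dmd → Label → Label → Label × Label
  | .wd, x, y => (x, y)
  | .bd, x, y => (y, x)

/-- Relational atoms of a `Π`-chain through the list of labels `ls`. -/
def chainAtoms : List Dmd → List Label → List (Label × Label)
  | d :: ds, a :: b :: rest => relAtom d a b :: chainAtoms ds (b :: rest)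
  | _, _ => []

/-- `ls` is a chain of labels for the diamond string `ds` from `x` to `y`
    (an empty string forces `x = y`). -/
def IsChainList (ds : List Dmd) (x y : Label) (ls : List Label) : Prop :=
  ls.length = ds.length + 1 ∧ ls.head? = some x ∧ ls.getLast? = some y

/-- The structural rules `LabSt(GP)` (premise, conclusion): for `ΠA → ΣA ∈ GP`,
    from `R, R_Π x y, R_Σ x y, Γ` infer `R, R_Π x y, Γ`, where all labels in
    `R_Σ x y` other than `x, y` are eigenvariables. -/
def LabSt (GP : Set GenPath) : LSeq → LSeq → Prop :=
  fun prem concl => ∃ gp ∈ GP,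
    ∃ (R : RelSet) (Γ : Multiset (Label × Formula)) (x y : Label)
      (als sls : List Label),
      IsChainList gp.ant x y als ∧ IsChainList gp.suc x y sls ∧
      concl = (R ∪ (chainAtoms gp.ant als).toFinset, Γ) ∧
      prem = (R ∪ (chainAtoms gp.ant als).toFinset ∪
                (chainAtoms gp.suc sls).toFinset, Γ) ∧
      (∀ z ∈ sls, z ≠ x → z ≠ y → ¬ occursLS z concl)

/-- The empty set of extension rules on labeled sequents. -/
def NoExt : LSeq → LSeq → Prop := fun _ _ => False

/-- Derivations in the labeled calculus `G3Kt` extended with rules `Ext`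
    (relating premise to conclusion). -/
inductive G3KtD (Ext : LSeq → LSeq → Prop) :
    RelSet → Multiset (Label × Formula) → Type
  | id (R : RelSet) (Γ : Multiset (Label × Formula)) (x : Label) (p : Nat) :
      G3KtD Ext R ((x, .pos p) ::ₘ (x, .neg p) ::ₘ Γ)
  | orR (R : RelSet) (Γ : Multiset (Label × Formula)) (x : Label) (A B : Formula)
      (D : G3KtD Ext R ((x, A) ::ₘ (x, B) ::ₘ Γ)) :
      G3KtD Ext R ((x, .or A B) ::ₘ Γ)
  | andR (R : RelSet) (Γ : Multiset (Label × Formula)) (x : Label) (A B : Formula)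
      (D1 : G3KtD Ext R ((x, A) ::ₘ Γ)) (D2 : G3KtD Ext R ((x, B) ::ₘ Γ)) :
      G3KtD Ext R ((x, .and A B) ::ₘ Γ)
  | boxR (R : RelSet) (Γ : Multiset (Label × Formula)) (x y : Label) (A : Formula)
      (hy : ¬ occursLS y (R, (x, Formula.box A) ::ₘ Γ))
      (D : G3KtD Ext (insert (x, y) R) ((y, A) ::ₘ Γ)) :
      G3KtD Ext R ((x, .box A) ::ₘ Γ)
  | diaR (R : RelSet) (Γ : Multiset (Label × Formula)) (x y : Label) (A : Formula)
      (h : (x, y) ∈ R)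
      (D : G3KtD Ext R ((y, A) ::ₘ (x, Formula.dia A) ::ₘ Γ)) :
      G3KtD Ext R ((x, .dia A) ::ₘ Γ)
  | bboxR (R : RelSet) (Γ : Multiset (Label × Formula)) (x y : Label) (A : Formula)
      (hy : ¬ occursLS y (R, (x, Formula.bbox A) ::ₘ Γ))
      (D : G3KtD Ext (insert (y, x) R) ((y, A) ::ₘ Γ)) :
      G3KtD Ext R ((x, .bbox A) ::ₘ Γ)
  | bdiaR (R : RelSet) (Γ : Multiset (Label × Formula)) (x y : Label) (A : Formula)
      (h : (y, x) ∈ R)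
      (D : G3KtD Ext R ((y, A) ::ₘ (x, Formula.bdia A) ::ₘ Γ)) :
      G3KtD Ext R ((x, .bdia A) ::ₘ Γ)
  | ext (R' : RelSet) (Γ' : Multiset (Label × Formula))
      (R : RelSet) (Γ : Multiset (Label × Formula))
      (h : Ext (R', Γ') (R, Γ)) (D : G3KtD Ext R' Γ') : G3KtD Ext R Γ

/-- Derivability in `G3Kt + Ext`. -/
def G3KtDeriv (Ext : LSeq → LSeq → Prop) (R : RelSet)
    (Γ : Multiset (Label × Formula)) : Prop :=
  Nonempty (G3KtD Ext R Γ)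

/-- `Q` holds of every labeled sequent occurring in the derivation `D`
    (including the end sequent). -/
def G3KtD.allSeq {Ext : LSeq → LSeq → Prop} (Q : LSeq → Prop) :
    ∀ {R : RelSet} {Γ : Multiset (Label × Formula)}, G3KtD Ext R Γ → Prop
  | _, _, .id R Γ x p => Q (R, (x, .pos p) ::ₘ (x, .neg p) ::ₘ Γ)
  | _, _, .orR R Γ x A B D => Q (R, (x, .or A B) ::ₘ Γ) ∧ D.allSeq Q
  | _, _, .andR R Γ x A B D1 D2 =>
      Q (R, (x, .and A B) ::ₘ Γ) ∧ D1.allSeq Q ∧ D2.allSeq Q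
  | _, _, .boxR R Γ x _ A _ D => Q (R, (x, .box A) ::ₘ Γ) ∧ D.allSeq Q
  | _, _, .diaR R Γ x _ A _ D => Q (R, (x, .dia A) ::ₘ Γ) ∧ D.allSeq Q
  | _, _, .bboxR R Γ x _ A _ D => Q (R, (x, .bbox A) ::ₘ Γ) ∧ D.allSeq Q
  | _, _, .bdiaR R Γ x _ A _ D => Q (R, (x, .bdia A) ::ₘ Γ) ∧ D.allSeq Q
  | _, _, .ext _ _ R Γ _ D => Q (R, Γ) ∧ D.allSeq Q

/-! ## Paths, inverses, compositions, completion, propagation rules -/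

/-- The inverse of a diamond: `◇⁻¹ = ◆` and `◆⁻¹ = ◇`. -/
def Dmd.inv : Dmd → Dmd
  | .wd => .bd
  | .bd => .wd

/-- The inverse `I(F)` of a path axiom `F`. -/
def PathAx.inv (F : PathAx) : PathAx := ⟨(F.ant.map Dmd.inv).reverse, F.suc.inv⟩

/-- `I(P)`, the set of inverses of the path axioms in `P`. -/
def invSet (P : Set PathAx) : Set PathAx := {F | ∃ G ∈ P, F = G.inv}

/-- The completion `P*`: the smallest set of path axioms containing `P`,
    containing `◇A → ◇A` and `◆A → ◆A`, and closed under compositions. -/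
inductive Completion (P : Set PathAx) : PathAx → Prop
  | base {F : PathAx} : F ∈ P → Completion P F
  | wrefl : Completion P ⟨[Dmd.wd], Dmd.wd⟩
  | brefl : Completion P ⟨[Dmd.bd], Dmd.bd⟩
  | comp {F G : PathAx} (i : Nat) (hi : i < G.ant.length) :
      Completion P F → Completion P G → G.ant.get ⟨i, hi⟩ = F.suc →
      Completion P ⟨G.ant.take i ++ F.ant ++ G.ant.drop (i + 1), G.suc⟩

/-- `(P ∪ I(P))*`. -/
def PStar (P : Set PathAx) : PathAx → Prop := Completion (P ∪ invSet P)

/-- A path from `x` to `y` with the given string of diamonds in the propagation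
    graph determined by the edge set `E`: each `Rxy` contributes the labeled
    edges `(x, y, ◇)` and `(y, x, ◆)`. -/
inductive LPath (E : Finset (Label × Label)) : Label → Label → List Dmd → Prop
  | nil (x : Label) : LPath E x x []
  | fwd {x z y : Label} {ds : List Dmd} :
      (x, z) ∈ E → LPath E z y ds → LPath E x y (Dmd.wd :: ds)
  | bwd {x z y : Label} {ds : List Dmd} :
      (z, x) ∈ E → LPath E z y ds → LPath E x y (Dmd.bd :: ds)

/-- The labeled propagation rules `LabPr(P)` (premise, conclusion):
    from `R, x:⟨?⟩A, y:A, Γ` infer `R, x:⟨?⟩A, Γ`, provided there is a path `π`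
    from `x` to `y` in the propagation graph of the premise whose string `Π`
    satisfies `ΠA → ⟨?⟩A ∈ (P ∪ I(P))*`. -/
def LabPr (P : Set PathAx) : LSeq → LSeq → Prop :=
  fun prem concl =>
    ∃ (R : RelSet) (Γ : Multiset (Label × Formula)) (x y : Label)
      (A : Formula) (d : Dmd) (Pi : List Dmd),
      prem = (R, (x, dmdF d A) ::ₘ (y, A) ::ₘ Γ) ∧
      concl = (R, (x, dmdF d A) ::ₘ Γ) ∧
      LPath R x y Pi ∧ PStar P ⟨Pi, d⟩

/-! ## Labeled graphs, labeled polytrees, and the translations 𝔏 and 𝔑 -/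

/-- A labeled graph `(V, E, L)`: vertices decorated with multisets of formulae. -/
structure LGraph : Type where
  V : Finset Label
  E : Finset (Label × Label)
  L : Label → Multiset Formula

/-- Union of labeled graphs (multiset union of labels at shared vertices). -/
def LGraph.union (G H : LGraph) : LGraph :=
  ⟨G.V ∪ H.V, G.E ∪ H.E, fun z => G.L z + H.L z⟩

/-- Isomorphism of labeled graphs: a bijection between the vertex sets
    preserving edges and vertex labels. -/
def LGraph.Iso (G H : LGraph) : Prop :=
  ∃ f : Label → Label, Set.BijOn f ↑G.V ↑H.V ∧
    (∀ u ∈ G.V, ∀ v ∈ G.V, ((u, v) ∈ G.E ↔ (f u, f v) ∈ H.E)) ∧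
    (∀ v ∈ G.V, G.L v = H.L (f v))

/-- A labeled graph is a labeled polytree when its underlying undirected
    graph is a tree. -/
def LGraph.IsPolytree (G : LGraph) : Prop :=
  (∀ x y : Label, (x, y) ∈ G.E → (y, x) ∉ G.E) ∧
  (∀ e ∈ G.E, e.1 ∈ G.V ∧ e.2 ∈ G.V) ∧
  ((SimpleGraph.fromRel fun a b => (a, b) ∈ G.E).induce (↑G.V : Set Label)).IsTree

/-- The translation `𝔏ₓ` from nested sequents to labeled graphs (relational,
    since fresh vertices may be chosen arbitrarily): `LabT x X G` states that
    `G` is a labeled graph obtained by translating `X` starting at vertex `x`. -/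
inductive LabT : Label → NSeq → LGraph → Prop
  | empty (x : Label) : LabT x .empty ⟨∅, ∅, fun _ => 0⟩
  | fml (x : Label) (A : Formula) :
      LabT x (.fml A) ⟨{x}, ∅, fun z => if z = x then {A} else 0⟩
  | comma {x : Label} {X Y : NSeq} {G H : LGraph} :
      LabT x X G → LabT x Y H → G.V ∩ H.V ⊆ {x} →
      LabT x (X.comma Y) (G.union H)
  | white {x y : Label} {X : NSeq} {G : LGraph} :
      LabT y X G → x ∉ G.V → x ≠ y →
      LabT x X.white ⟨insert x (insert y G.V), insert (x, y) G.E, G.L⟩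
  | black {x y : Label} {X : NSeq} {G : LGraph} :
      LabT y X G → x ∉ G.V → x ≠ y →
      LabT x X.black ⟨insert x (insert y G.V), insert (y, x) G.E, G.L⟩

/-- The translation `𝔑ₓ` from labeled polytrees (rooted at a chosen vertex `x`)
    to nested sequents: the inverse of the translation `𝔏ₓ`. -/
def NTrans (x : Label) (G : LGraph) (X : NSeq) : Prop := LabT x X G

/-- The labeled graph of a labeled sequent `R, Γ`: vertices are the occurring
    labels, edges are given by `R`, and each vertex `x` is labeled by the
    multiset `{A | x:A ∈ Γ}`. -/
def toLGraph (R : RelSet) (Γ : Multiset (Label × Formula)) : LGraph where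
  V := R.image Prod.fst ∪ R.image Prod.snd ∪ (Γ.map Prod.fst).toFinset
  E := R
  L := fun z => (Γ.filter fun p => p.1 = z).map Prod.snd

/-- The multiset of labeled formulae of a labeled graph, read as a sequent. -/
def LGraph.toSeqGamma (G : LGraph) : Multiset (Label × Formula) :=
  G.V.val.bind fun v => (G.L v).map fun A => (v, A)

/-- The set of labels occurring in a labeled sequent. -/
def seqLabels (R : RelSet) (Γ : Multiset (Label × Formula)) : Set Label :=
  {z | (∃ w, (z, w) ∈ R ∨ (w, z) ∈ R) ∨ ∃ A, (z, A) ∈ Γ}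

/-- `R, Γ` is a labeled polytree sequent: its underlying undirected graph
    (on the occurring labels) is a tree. -/
def IsPolytreeSeq (R : RelSet) (Γ : Multiset (Label × Formula)) : Prop :=
  (∀ x y : Label, (x, y) ∈ R → (y, x) ∉ R) ∧
  ((SimpleGraph.fromRel fun a b => (a, b) ∈ R).induce (seqLabels R Γ)).IsTree

/-- The labeled edges `(u, v, ◇)` and `(v, u, ◆)` of the propagation graph
    determined by an edge set. -/
def propEdges (E : Finset (Label × Label)) : Set (Label × Label × Dmd) :=
  {e | ∃ u v : Label, (u, v) ∈ E ∧ (e = (u, v, Dmd.wd) ∨ e = (v, u, Dmd.bd))}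

/-- The deep propagation rules `DeepPr(P)` (premise, conclusion), expressed via
    the labeled polytree representation of nested sequents: from
    `X[⟨?⟩A]ᵢ[A]ⱼ` infer `X[⟨?⟩A]ᵢ[∅]ⱼ`, provided there is a path from node `i`
    (= `u`) to node `j` (= `v`) in the propagation graph of the premise whose
    string `Π` satisfies `ΠA → ⟨?⟩A ∈ (P ∪ I(P))*`. -/
def DeepPrL (P : Set PathAx) : NSeq → NSeq → Prop :=
  fun prem concl =>
    ∃ (r : Label) (G : LGraph) (u v : Label) (A : Formula) (d : Dmd)
      (Pi : List Dmd),
      LabT r prem G ∧ LPath G.E u v Pi ∧ PStar P ⟨Pi, d⟩ ∧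
      dmdF d A ∈ G.L u ∧ A ∈ G.L v ∧
      LabT r concl ⟨G.V, G.E, fun z => if z = v then (G.L v).erase A else G.L z⟩

/-- Substitution of the label `y` by the label `x`. -/
def subLabel (x y z : Label) : Label := if z = y then x else z

/-! ### Fillings of contexts and the comma congruence -/

theorem Ctx.fill_congr (C : Ctx) {X Y : NSeq} (h : NEquiv X Y) :
    NEquiv (C.fill X) (C.fill Y) := by
  induction C with
  | hole => exact h
  | commaL C Z ih => exact .commaCongr ih (.refl Z)
  | white C ih => exact .whiteCongr ih
  | black C ih => exact .blackCongr ih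

/-! ### Homomorphisms of nested sequents into labeled graphs -/

/-- `Cov G x A`: the formula `A` is covered at the node `x` of `G`, that is, `A` can be obtained
from the labels of `G` by reading the invertible rules downwards. A literal or a formula `◇A`, `◆A`
is covered only by occurring. -/
inductive Cov (G : LGraph) : Label → Formula → Prop
  | mem {x : Label} {A : Formula} : A ∈ G.L x → Cov G x A
  | or {x : Label} {A B : Formula} : Cov G x A → Cov G x B → Cov G x (.or A B)
  | andL {x : Label} {A B : Formula} : Cov G x A → Cov G x (.and A B)
  | andR {x : Label} {A B : Formula} : Cov G x B → Cov G x (.and A B)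
  | box {x y : Label} {A : Formula} : (x, y) ∈ G.E → Cov G y A → Cov G x (.box A)
  | bbox {x y : Label} {A : Formula} : (y, x) ∈ G.E → Cov G y A → Cov G x (.bbox A)

/-- `Emb G X w`: the tree of `X` maps homomorphically into `G`, its root going to `w`, edges going
to edges of the same orientation and formulae to covered formulae. The map need not be injective. -/
def Emb (G : LGraph) : NSeq → Label → Prop
  | .empty, _ => True
  | .fml A, w => Cov G w A
  | .comma X Y, w => Emb G X w ∧ Emb G Y w
  | .white X, w => ∃ v, (w, v) ∈ G.E ∧ Emb G X v
  | .black X, w => ∃ v, (v, w) ∈ G.E ∧ Emb G X v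

/-- `EmbCtx G C w v`: the tree of the context `C` maps homomorphically into `G`, its root going to
`w` and its hole to `v`. -/
def EmbCtx (G : LGraph) : Ctx → Label → Label → Prop
  | .hole, w, v => w = v
  | .commaL C Y, w, v => EmbCtx G C w v ∧ Emb G Y w
  | .white C, w, v => ∃ u, (w, u) ∈ G.E ∧ EmbCtx G C u v
  | .black C, w, v => ∃ u, (u, w) ∈ G.E ∧ EmbCtx G C u v

/-- `Refines G H`: the identity on labels is a homomorphism from `G` to `H`, in the sense of
`Emb`. -/
def Refines (G H : LGraph) : Prop :=
  G.E ⊆ H.E ∧ ∀ z A, A ∈ G.L z → Cov H z A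

theorem Cov.mono {G H : LGraph} (h : Refines G H) {x : Label} {A : Formula} (c : Cov G x A) :
    Cov H x A := by
  induction c with
  | mem hm => exact h.2 _ _ hm
  | or _ _ ih1 ih2 => exact .or ih1 ih2
  | andL _ ih => exact .andL ih
  | andR _ ih => exact .andR ih
  | box he _ ih => exact .box (h.1 he) ih
  | bbox he _ ih => exact .bbox (h.1 he) ih

theorem Emb.mono {G H : LGraph} (h : Refines G H) {X : NSeq} :
    ∀ {w : Label}, Emb G X w → Emb H X w := by
  induction X with
  | empty => intro w _; trivial
  | fml A => intro w c; exact Cov.mono h c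
  | comma X Y ih1 ih2 => rintro w ⟨h1, h2⟩; exact ⟨ih1 h1, ih2 h2⟩
  | white X ih => rintro w ⟨v, he, hv⟩; exact ⟨v, h.1 he, ih hv⟩
  | black X ih => rintro w ⟨v, he, hv⟩; exact ⟨v, h.1 he, ih hv⟩

theorem EmbCtx.mono {G H : LGraph} (h : Refines G H) {C : Ctx} :
    ∀ {w v : Label}, EmbCtx G C w v → EmbCtx H C w v := by
  induction C with
  | hole => intro w v e; exact e
  | commaL C Y ih => rintro w v ⟨h1, h2⟩; exact ⟨ih h1, Emb.mono h h2⟩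
  | white C ih => rintro w v ⟨u, he, hv⟩; exact ⟨u, h.1 he, ih hv⟩
  | black C ih => rintro w v ⟨u, he, hv⟩; exact ⟨u, h.1 he, ih hv⟩

theorem emb_fill {G : LGraph} {C : Ctx} {X : NSeq} :
    ∀ {w : Label}, Emb G (C.fill X) w ↔ ∃ v, EmbCtx G C w v ∧ Emb G X v := by
  induction C with
  | hole => intro w; simp [Ctx.fill, EmbCtx]
  | commaL C Y ih => intro w; simp only [Ctx.fill, EmbCtx, Emb, ih]; grind
  | white C ih => intro w; simp only [Ctx.fill, EmbCtx, Emb, ih]; grind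
  | black C ih => intro w; simp only [Ctx.fill, EmbCtx, Emb, ih]; grind

theorem emb_equiv {G : LGraph} {X Y : NSeq} (h : NEquiv X Y) :
    ∀ w, Emb G X w ↔ Emb G Y w := by
  induction h with
  | refl X => intro w; rfl
  | symm _ ih => intro w; exact (ih w).symm
  | trans _ _ ih1 ih2 => intro w; exact (ih1 w).trans (ih2 w)
  | comm X Y => intro w; exact and_comm
  | assoc X Y Z => intro w; exact and_assoc
  | unit X => intro w; exact and_iff_left trivial
  | commaCongr _ _ ih1 ih2 => intro w; exact and_congr (ih1 w) (ih2 w)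
  | whiteCongr _ ih => intro w; simp only [Emb, ih]
  | blackCongr _ ih => intro w; simp only [Emb, ih]

/-! ### Labeled trees of nested sequents -/

theorem LabT.mem_V {x : Label} {X : NSeq} {G : LGraph} (h : LabT x X G) :
    ∀ {z : Label} {A : Formula}, A ∈ G.L z → z ∈ G.V := by
  induction h with
  | empty x => intro z A hA; simp at hA
  | fml x B =>
    intro z A hA
    by_cases hz : z = x <;> simp_all
  | comma _ _ _ ih1 ih2 =>
    intro z A hA
    rcases Multiset.mem_add.1 hA with hA | hA
    · exact Finset.mem_union_left _ (ih1 hA)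
    · exact Finset.mem_union_right _ (ih2 hA)
  | white _ _ _ ih => intro z A hA; simp [ih hA]
  | black _ _ _ ih => intro z A hA; simp [ih hA]

theorem LabT.edge_V {x : Label} {X : NSeq} {G : LGraph} (h : LabT x X G) :
    ∀ {a b : Label}, (a, b) ∈ G.E → a ∈ G.V ∧ b ∈ G.V := by
  induction h with
  | empty x => intro a b h; simp at h
  | fml x B => intro a b h; simp at h
  | comma _ _ _ ih1 ih2 =>
    intro a b h
    simp only [LGraph.union, Finset.mem_union] at h ⊢
    grind
  | white _ _ _ ih =>
    intro a b h
    simp only [Finset.mem_insert, Prod.mk.injEq] at h ⊢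
    grind
  | black _ _ _ ih =>
    intro a b h
    simp only [Finset.mem_insert, Prod.mk.injEq] at h ⊢
    grind

theorem LabT.exists_avoiding (X : NSeq) :
    ∀ (x : Label) (S : Finset Label), ∃ G, LabT x X G ∧ G.V ∩ S ⊆ {x} := by
  induction X with
  | empty => intro x S; exact ⟨_, .empty x, by simp⟩
  | fml A => intro x S; exact ⟨_, .fml x A, Finset.inter_subset_left⟩
  | comma X Y ih1 ih2 =>
    intro x S
    obtain ⟨G, hG, hGS⟩ := ih1 x S
    obtain ⟨H, hH, hHS⟩ := ih2 x (S ∪ G.V)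
    refine ⟨_, .comma hG hH ?_, ?_⟩
    · intro z hz
      apply hHS
      simp only [Finset.mem_inter, Finset.mem_union] at hz ⊢
      grind
    · intro z hz
      have h1 := @hGS z
      have h2 := @hHS z
      simp only [LGraph.union, Finset.mem_inter, Finset.mem_union] at hz h1 h2
      grind
  | white X ih =>
    intro x S
    obtain ⟨y, hy⟩ := Infinite.exists_notMem_finset (insert x S)
    obtain ⟨G, hG, hGS⟩ := ih y (insert x S)
    have hx : x ≠ y := by rintro rfl; simp at hy
    refine ⟨_, .white hG ?_ hx, ?_⟩
    · intro hxG
      have := @hGS x (by simp [hxG])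
      simp at this
      exact hx this
    · intro z hz
      have h1 := @hGS z
      simp only [Finset.mem_inter, Finset.mem_insert, Finset.mem_singleton] at hz h1 hy ⊢
      grind
  | black X ih =>
    intro x S
    obtain ⟨y, hy⟩ := Infinite.exists_notMem_finset (insert x S)
    obtain ⟨G, hG, hGS⟩ := ih y (insert x S)
    have hx : x ≠ y := by rintro rfl; simp at hy
    refine ⟨_, .black hG ?_ hx, ?_⟩
    · intro hxG
      have := @hGS x (by simp [hxG])
      simp at this
      exact hx this
    · intro z hz
      have h1 := @hGS z
      simp only [Finset.mem_inter, Finset.mem_insert, Finset.mem_singleton] at hz h1 hy ⊢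
      grind

/-- A homomorphism on labels from the labeled tree of `X` gives one from `X` itself. -/
theorem LabT.emb {x : Label} {X : NSeq} {G : LGraph} (h : LabT x X G) {H : LGraph}
    {f : Label → Label} :
    (∀ a b, (a, b) ∈ G.E → (f a, f b) ∈ H.E) → (∀ z A, A ∈ G.L z → Cov H (f z) A) →
      Emb H X (f x) := by
  induction h with
  | empty x => intro _ _; trivial
  | fml x A => intro _ hL; exact hL x A (by simp)
  | comma _ _ _ ih1 ih2 =>
    intro hE hL
    refine ⟨ih1 (fun a b hab => hE a b ?_) (fun z A hA => hL z A ?_),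
      ih2 (fun a b hab => hE a b ?_) (fun z A hA => hL z A ?_)⟩
    · exact Finset.mem_union_left _ hab
    · exact Multiset.mem_add.2 (.inl hA)
    · exact Finset.mem_union_right _ hab
    · exact Multiset.mem_add.2 (.inr hA)
  | white _ _ _ ih =>
    intro hE hL
    exact ⟨_, hE _ _ (Finset.mem_insert_self _ _),
      ih (fun a b hab => hE a b (Finset.mem_insert_of_mem hab)) hL⟩
  | black _ _ _ ih =>
    intro hE hL
    exact ⟨_, hE _ _ (Finset.mem_insert_self _ _),
      ih (fun a b hab => hE a b (Finset.mem_insert_of_mem hab)) hL⟩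

/-- Conversely, a homomorphism from `X` is realized by a function on the labels of any labeled
tree of `X`. -/
theorem LabT.exists_hom {x : Label} {X : NSeq} {G : LGraph} (h : LabT x X G) {H : LGraph} :
    ∀ {w : Label}, Emb H X w → ∃ f : Label → Label, f x = w ∧
      (∀ a b, (a, b) ∈ G.E → (f a, f b) ∈ H.E) ∧ (∀ z A, A ∈ G.L z → Cov H (f z) A) := by
  induction h with
  | empty x => intro w _; exact ⟨fun _ => w, rfl, by simp, by simp⟩
  | fml x A =>
    intro w hw
    refine ⟨fun _ => w, rfl, by simp, fun z B hB => ?_⟩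
    by_cases hz : z = x
    · simp only [hz, if_true, Multiset.mem_singleton] at hB
      subst hB; exact hw
    · simp [hz] at hB
  | @comma x X Y G1 G2 h1 h2 hd ih1 ih2 =>
    rintro w ⟨hw1, hw2⟩
    obtain ⟨f1, e1, hE1, hL1⟩ := ih1 hw1
    obtain ⟨f2, e2, hE2, hL2⟩ := ih2 hw2
    -- The two trees share at most the label `x`, where both maps take the value `w`.
    have key1 : ∀ z ∈ G1.V, (if z ∈ G1.V then f1 z else f2 z) = f1 z := fun z hz => if_pos hz
    have key2 : ∀ z ∈ G2.V, (if z ∈ G1.V then f1 z else f2 z) = f2 z := by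
      intro z hz
      split_ifs with hz1
      · have : z = x := by simpa using hd (Finset.mem_inter.2 ⟨hz1, hz⟩)
        rw [this, e1, e2]
      · rfl
    refine ⟨fun z => if z ∈ G1.V then f1 z else f2 z, ?_, fun a b hab => ?_, fun z A hA => ?_⟩
    · dsimp only
      split_ifs
      · exact e1
      · exact e2
    · dsimp only
      rcases Finset.mem_union.1 hab with hab | hab
      · have := h1.edge_V hab
        rw [key1 a this.1, key1 b this.2]; exact hE1 a b hab
      · have := h2.edge_V hab
        rw [key2 a this.1, key2 b this.2]; exact hE2 a b hab
    · dsimp only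
      rcases Multiset.mem_add.1 hA with hA | hA
      · rw [key1 z (h1.mem_V hA)]; exact hL1 z A hA
      · rw [key2 z (h2.mem_V hA)]; exact hL2 z A hA
  | @white x y X G h hx hxy ih =>
    rintro w ⟨v, he, hv⟩
    obtain ⟨f, e, hE, hL⟩ := ih hv
    have key : ∀ z ∈ G.V, Function.update f x w z = f z := fun z hz =>
      Function.update_of_ne (by rintro rfl; exact hx hz) _ _
    have key' : Function.update f x w y = v := by rw [Function.update_of_ne hxy.symm, e]
    refine ⟨Function.update f x w, by simp, fun a b hab => ?_, fun z A hA => ?_⟩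
    · rcases Finset.mem_insert.1 hab with hab | hab
      · obtain ⟨rfl, rfl⟩ := Prod.mk.inj hab
        rw [key']; simpa using he
      · have := h.edge_V hab
        rw [key a this.1, key b this.2]; exact hE a b hab
    · rw [key z (h.mem_V hA)]; exact hL z A hA
  | @black x y X G h hx hxy ih =>
    rintro w ⟨v, he, hv⟩
    obtain ⟨f, e, hE, hL⟩ := ih hv
    have key : ∀ z ∈ G.V, Function.update f x w z = f z := fun z hz =>
      Function.update_of_ne (by rintro rfl; exact hx hz) _ _
    have key' : Function.update f x w y = v := by rw [Function.update_of_ne hxy.symm, e]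
    refine ⟨Function.update f x w, by simp, fun a b hab => ?_, fun z A hA => ?_⟩
    · rcases Finset.mem_insert.1 hab with hab | hab
      · obtain ⟨rfl, rfl⟩ := Prod.mk.inj hab
        rw [key']; simpa using he
      · have := h.edge_V hab
        rw [key a this.1, key b this.2]; exact hE a b hab
    · rw [key z (h.mem_V hA)]; exact hL z A hA

/-! ### Surgery on labeled trees -/

/-- A formula can be added at any node of a labeled tree. The root is admitted separately because
it need not occur in `G.V` (it does not for `ε`). -/
theorem LabT.add {x : Label} {X : NSeq} {G : LGraph} (h : LabT x X G) (A : Formula) {v : Label} :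
    v ∈ G.V ∨ v = x →
    ∃ X', LabT x X' ⟨insert v G.V, G.E, fun z => if z = v then A ::ₘ G.L z else G.L z⟩ := by
  have root : ∀ {x : Label} {X : NSeq} {G : LGraph}, LabT x X G →
      ∃ X', LabT x X' ⟨insert x G.V, G.E, fun z => if z = x then A ::ₘ G.L z else G.L z⟩ := by
    intro x X G h
    refine ⟨(NSeq.fml A).comma X, ?_⟩
    convert LabT.comma (.fml x A) h (Finset.inter_subset_left) using 1
    simp only [LGraph.union, LGraph.mk.injEq, Finset.empty_union, true_and]
    refine ⟨by ext; simp, ?_⟩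
    funext z
    by_cases hz : z = x <;> simp [hz]
  induction h with
  | empty x =>
    rintro (hv | rfl)
    · simp at hv
    · exact root (.empty _)
  | fml x B =>
    intro hv
    obtain rfl : v = x := by simpa using hv
    exact root (.fml _ _)
  | @comma x X Y G1 G2 h1 h2 hd ih1 ih2 =>
    intro hv
    by_cases hvx : v = x
    · subst hvx; exact root (.comma h1 h2 hd)
    rcases Finset.mem_union.1 (hv.resolve_right hvx) with hv | hv
    · obtain ⟨X', hX'⟩ := ih1 (.inl hv)
      refine ⟨X'.comma Y, ?_⟩
      convert LabT.comma hX' h2 (by rwa [Finset.insert_eq_of_mem hv]) using 1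
      simp only [LGraph.union, LGraph.mk.injEq, true_and]
      refine ⟨by ext; simp, ?_⟩
      funext z
      by_cases hz : z = v <;> simp [hz]
    · obtain ⟨Y', hY'⟩ := ih2 (.inl hv)
      refine ⟨X.comma Y', ?_⟩
      convert LabT.comma h1 hY' (by rwa [Finset.insert_eq_of_mem hv]) using 1
      simp only [LGraph.union, LGraph.mk.injEq, true_and]
      refine ⟨by ext; simp, ?_⟩
      funext z
      by_cases hz : z = v <;> simp [hz]
  | @white x y X G h hx hxy ih =>
    intro hv
    by_cases hvx : v = x
    · subst hvx; exact root (.white h hx hxy)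
    obtain ⟨X', hX'⟩ := ih (by simp at hv; grind : v ∈ G.V ∨ v = y)
    refine ⟨X'.white, ?_⟩
    convert LabT.white hX' (by simp [hx, Ne.symm hvx]) hxy using 1
    simp only [LGraph.mk.injEq, and_true]
    grind
  | @black x y X G h hx hxy ih =>
    intro hv
    by_cases hvx : v = x
    · subst hvx; exact root (.black h hx hxy)
    obtain ⟨X', hX'⟩ := ih (by simp at hv; grind : v ∈ G.V ∨ v = y)
    refine ⟨X'.black, ?_⟩
    convert LabT.black hX' (by simp [hx, Ne.symm hvx]) hxy using 1
    simp only [LGraph.mk.injEq, and_true]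
    grind

/-- An occurrence of `F` at the node `v` can be brought into the hole of a context and replaced by
any `Z` whose labeled tree is fresh apart from its root `v`. Only lower bounds on the new graph are
recorded. -/
theorem LabT.focus {x : Label} {X : NSeq} {G : LGraph} (h : LabT x X G) {v : Label} {F : Formula} :
    F ∈ G.L v → ∃ C : Ctx, NEquiv (C.fill (.fml F)) X ∧
      ∀ Z H, LabT v Z H → G.V ∩ H.V ⊆ {v} → ∃ K : LGraph, LabT x (C.fill Z) K ∧
        K.V ⊆ G.V ∪ H.V ∧ G.E ⊆ K.E ∧ H.E ⊆ K.E ∧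
        (∀ z A, A ∈ G.L z → (z = v ∧ A = F) ∨ A ∈ K.L z) ∧ (∀ z A, A ∈ H.L z → A ∈ K.L z) := by
  induction h with
  | empty x => intro hF; simp at hF
  | fml x B =>
    intro hF
    obtain ⟨rfl, rfl⟩ : v = x ∧ F = B := by
      by_cases hz : v = x <;> simp_all
    refine ⟨.hole, .refl _, fun Z H hZ _ => ⟨H, hZ, by simp, by simp, by simp, ?_, by simp⟩⟩
    intro z A hA
    left
    by_cases hz : z = v <;> simp_all
  | @comma x X Y G1 G2 h1 h2 hd ih1 ih2 =>
    intro hF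
    rcases Multiset.mem_add.1 hF with hF | hF
    · obtain ⟨C, hC, hr⟩ := ih1 hF
      refine ⟨.commaL C Y, .commaCongr hC (.refl _), fun Z H hZ hZd => ?_⟩
      obtain ⟨K, hK, kV, kE, kE', kL, kL'⟩ := hr Z H hZ
        ((Finset.inter_subset_inter_right Finset.subset_union_left).trans hZd)
      have hv := h1.mem_V hF
      refine ⟨_, .comma hK h2 ?_, ?_, ?_, ?_, ?_, ?_⟩
      · intro z hz
        have a1 := @kV z
        have a2 := @hd z
        have a3 := @hZd z
        simp only [LGraph.union, Finset.mem_inter, Finset.mem_union, Finset.mem_singleton]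
          at hz a1 a2 a3 ⊢
        grind
      · intro z hz
        have a1 := @kV z
        simp only [LGraph.union, Finset.mem_union] at hz a1 ⊢
        grind
      · exact Finset.union_subset_union_left kE
      · exact kE'.trans Finset.subset_union_left
      · intro z A hA
        have := kL z A
        simp only [LGraph.union, Multiset.mem_add] at hA ⊢
        grind
      · intro z A hA
        exact Multiset.mem_add.2 (.inl (kL' z A hA))
    · obtain ⟨C, hC, hr⟩ := ih2 hF
      refine ⟨.commaL C X, (NEquiv.commaCongr hC (.refl _)).trans (.comm _ _),
        fun Z H hZ hZd => ?_⟩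
      obtain ⟨K, hK, kV, kE, kE', kL, kL'⟩ := hr Z H hZ
        ((Finset.inter_subset_inter_right Finset.subset_union_right).trans hZd)
      have hv := h2.mem_V hF
      refine ⟨_, .comma hK h1 ?_, ?_, ?_, ?_, ?_, ?_⟩
      · intro z hz
        have a1 := @kV z
        have a2 := @hd z
        have a3 := @hZd z
        simp only [LGraph.union, Finset.mem_inter, Finset.mem_union, Finset.mem_singleton]
          at hz a1 a2 a3 ⊢
        grind
      · intro z hz
        have a1 := @kV z
        simp only [LGraph.union, Finset.mem_union] at hz a1 ⊢
        grind
      · exact Finset.union_subset Finset.subset_union_right (kE.trans Finset.subset_union_left)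
      · exact kE'.trans Finset.subset_union_left
      · intro z A hA
        have := kL z A
        simp only [LGraph.union, Multiset.mem_add] at hA ⊢
        grind
      · intro z A hA
        exact Multiset.mem_add.2 (.inl (kL' z A hA))
  | @white x y X G h hx hxy ih =>
    intro hF
    obtain ⟨C, hC, hr⟩ := ih hF
    refine ⟨.white C, .whiteCongr hC, fun Z H hZ hZd => ?_⟩
    have hv := h.mem_V hF
    obtain ⟨K, hK, kV, kE, kE', kL, kL'⟩ := hr Z H hZ (fun z hz => hZd (by simp_all))
    refine ⟨_, .white hK (fun hxK => ?_) hxy, ?_, ?_, ?_, kL, kL'⟩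
    · have a1 := @kV x hxK
      have a3 := @hZd x
      simp only [Finset.mem_inter, Finset.mem_union, Finset.mem_insert, Finset.mem_singleton]
        at a1 a3
      grind
    · intro z hz
      have a1 := @kV z
      simp only [Finset.mem_union, Finset.mem_insert] at hz a1 ⊢
      grind
    · exact Finset.insert_subset_insert _ kE
    · exact kE'.trans (Finset.subset_insert _ _)
  | @black x y X G h hx hxy ih =>
    intro hF
    obtain ⟨C, hC, hr⟩ := ih hF
    refine ⟨.black C, .blackCongr hC, fun Z H hZ hZd => ?_⟩
    have hv := h.mem_V hF
    obtain ⟨K, hK, kV, kE, kE', kL, kL'⟩ := hr Z H hZ (fun z hz => hZd (by simp_all))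
    refine ⟨_, .black hK (fun hxK => ?_) hxy, ?_, ?_, ?_, kL, kL'⟩
    · have a1 := @kV x hxK
      have a3 := @hZd x
      simp only [Finset.mem_inter, Finset.mem_union, Finset.mem_insert, Finset.mem_singleton]
        at a1 a3
      grind
    · intro z hz
      have a1 := @kV z
      simp only [Finset.mem_union, Finset.mem_insert] at hz a1 ⊢
      grind
    · exact Finset.insert_subset_insert _ kE
    · exact kE'.trans (Finset.subset_insert _ _)

theorem LabT.root_focus {x : Label} {X : NSeq} {G : LGraph} (h : LabT x X G) {F : Formula} :
    F ∈ G.L x → ∃ Y, NEquiv ((NSeq.fml F).comma Y) X := by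
  induction h with
  | empty x => intro hF; simp at hF
  | fml x B =>
    intro hF
    obtain rfl : F = B := by simpa using hF
    exact ⟨.empty, .unit _⟩
  | @comma x X Y G1 G2 h1 h2 hd ih1 ih2 =>
    intro hF
    rcases Multiset.mem_add.1 hF with hF | hF
    · obtain ⟨W, hW⟩ := ih1 hF
      exact ⟨W.comma Y, (NEquiv.assoc _ _ _).symm.trans (.commaCongr hW (.refl _))⟩
    · obtain ⟨W, hW⟩ := ih2 hF
      exact ⟨W.comma X, ((NEquiv.assoc _ _ _).symm.trans (.commaCongr hW (.refl _))).trans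
        (.comm _ _)⟩
  | white h hx _ _ => intro hF; exact absurd (h.mem_V hF) hx
  | black h hx _ _ => intro hF; exact absurd (h.mem_V hF) hx

theorem LabT.focus_two {x : Label} {X : NSeq} {G : LGraph} (h : LabT x X G) {v : Label}
    {A B : Formula} (hAB : A ≠ B) : A ∈ G.L v → B ∈ G.L v →
      ∃ C : Ctx, NEquiv (C.fill ((NSeq.fml A).comma (.fml B))) X := by
  induction h with
  | empty x => intro hA; simp at hA
  | fml x D =>
    intro hA hB
    by_cases hz : v = x
    · simp only [hz, if_true, Multiset.mem_singleton] at hA hB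
      exact absurd (hA.trans hB.symm) hAB
    · simp [hz] at hA
  | @comma x X Y G1 G2 h1 h2 hd ih1 ih2 =>
    -- If the two occurrences lie on different sides of the comma, then `v` is the root.
    have split : ∀ {D E : Formula}, D ∈ G1.L v → E ∈ G2.L v →
        ∃ W, NEquiv (((NSeq.fml D).comma (.fml E)).comma W) (X.comma Y) := by
      intro D E hD hE
      obtain rfl : v = x := by
        simpa using hd (Finset.mem_inter.2 ⟨h1.mem_V hD, h2.mem_V hE⟩)
      obtain ⟨W1, hW1⟩ := h1.root_focus hD
      obtain ⟨W2, hW2⟩ := h2.root_focus hE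
      refine ⟨W1.comma W2, .trans ?_ (.commaCongr hW1 hW2)⟩
      refine (NEquiv.assoc _ _ _).trans (.trans (.commaCongr (.refl _) ?_) (NEquiv.assoc _ _ _).symm)
      exact (NEquiv.assoc _ _ _).symm.trans
        ((NEquiv.commaCongr (.comm _ _) (.refl _)).trans (.assoc _ _ _))
    intro hA hB
    rcases Multiset.mem_add.1 hA with hA | hA <;> rcases Multiset.mem_add.1 hB with hB | hB
    · obtain ⟨C, hC⟩ := ih1 hA hB
      exact ⟨.commaL C Y, .commaCongr hC (.refl _)⟩
    · obtain ⟨W, hW⟩ := split hA hB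
      exact ⟨.commaL .hole W, hW⟩
    · obtain ⟨W, hW⟩ := split hB hA
      exact ⟨.commaL .hole W, (NEquiv.commaCongr (.comm _ _) (.refl _)).trans hW⟩
    · obtain ⟨C, hC⟩ := ih2 hA hB
      exact ⟨.commaL C X, (NEquiv.commaCongr hC (.refl _)).trans (.comm _ _)⟩
  | white _ _ _ ih =>
    intro hA hB
    obtain ⟨C, hC⟩ := ih hA hB
    exact ⟨.white C, .whiteCongr hC⟩
  | black _ _ _ ih =>
    intro hA hB
    obtain ⟨C, hC⟩ := ih hA hB
    exact ⟨.black C, .blackCongr hC⟩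

/-! ### Rules of the calculus in terms of labeled trees -/

theorem LPath.map {E E' : Finset (Label × Label)} {f : Label → Label}
    (hf : ∀ a b, (a, b) ∈ E → (f a, f b) ∈ E') {u v : Label} {Pi : List Dmd}
    (h : LPath E u v Pi) : LPath E' (f u) (f v) Pi := by
  induction h with
  | nil x => exact .nil _
  | fwd he _ ih => exact .fwd (hf _ _ he) ih
  | bwd he _ ih => exact .bwd (hf _ _ he) ih

theorem LPath.mem_V {x : Label} {X : NSeq} {G : LGraph} (hG : LabT x X G) {u v : Label}
    {Pi : List Dmd} (h : LPath G.E u v Pi) : u ∈ G.V → v ∈ G.V := by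
  induction h with
  | nil x => exact id
  | fwd he _ ih => intro _; exact ih (hG.edge_V he).2
  | bwd he _ ih => intro _; exact ih (hG.edge_V he).1

theorem dmdF_ne (d : Dmd) (A : Formula) : dmdF d A ≠ A := by
  intro h
  have := congrArg sizeOf h
  cases d <;> simp [dmdF] at this

theorem cov_dmdF {G : LGraph} {x : Label} {d : Dmd} {A : Formula} (h : Cov G x (dmdF d A)) :
    dmdF d A ∈ G.L x := by
  cases d <;> (cases h; assumption)

/-- Replacing a formula `F` at `v` by some `Z` that covers `F`. -/
theorem LabT.replace {x : Label} {X : NSeq} {G : LGraph} (h : LabT x X G) {v : Label}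
    {F : Formula} (hF : F ∈ G.L v) : ∃ C : Ctx, NEquiv (C.fill (.fml F)) X ∧
      ∀ Z, (∀ H w, Emb H Z w → Cov H w F) →
        ∃ K : LGraph, LabT x (C.fill Z) K ∧ Refines G K ∧ Emb K Z v := by
  obtain ⟨C, hC, hr⟩ := h.focus hF
  refine ⟨C, hC, fun Z hZF => ?_⟩
  obtain ⟨H, hZ, hd⟩ := LabT.exists_avoiding Z v G.V
  obtain ⟨K, hK, -, kE, kE', kL, kL'⟩ := hr Z H hZ (by rwa [Finset.inter_comm])
  have hemb : Emb K Z v :=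
    hZ.emb (f := id) (fun a b hab => kE' hab) (fun z A hA => .mem (kL' z A hA))
  refine ⟨K, hK, ⟨kE, fun z A hA => ?_⟩, hemb⟩
  rcases kL z A hA with ⟨rfl, rfl⟩ | hA
  · exact hZF K _ hemb
  · exact .mem hA

/-- The propagation rule, read on the labeled tree of its conclusion. -/
theorem propagate {P : Set PathAx} {r : Label} {X : NSeq} {G : LGraph} (h : LabT r X G)
    {u v : Label} {d : Dmd} {A : Formula} {Pi : List Dmd} (hu : dmdF d A ∈ G.L u)
    (hp : LPath G.E u v Pi) (hPi : PStar P ⟨Pi, d⟩)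
    (prem : ∀ X' G', LabT r X' G' → Refines G G' → A ∈ G'.L v → DKT (DeepPrL P) X') :
    DKT (DeepPrL P) X := by
  have hv : v ∈ G.V := hp.mem_V h (h.mem_V hu)
  obtain ⟨X', hX'⟩ := h.add A (.inl hv)
  have hmem : ∀ z B, B ∈ G.L z → B ∈ if z = v then A ::ₘ G.L z else G.L z := by
    intro z B hB
    split_ifs
    · exact Multiset.mem_cons_of_mem hB
    · exact hB
  refine .ext ⟨r, _, u, v, A, d, Pi, hX', hp, hPi, hmem _ _ hu, by simp, ?_⟩
    (prem X' _ hX' ⟨Finset.Subset.refl _, fun z B hB => .mem (hmem z B hB)⟩ (by simp))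
  convert h using 1
  rw [LGraph.mk.injEq]
  refine ⟨Finset.insert_eq_of_mem hv, rfl, ?_⟩
  funext z
  by_cases hz : z = v <;> simp [hz]

/-- Derivability is preserved along homomorphisms that need only cover formulae. -/
theorem DKT.of_emb {P : Set PathAx} {X : NSeq} (D : DKT (DeepPrL P) X) :
    ∀ {r : Label} {X' : NSeq} {G : LGraph} {w : Label}, LabT r X' G → Emb G X w →
      DKT (DeepPrL P) X' := by
  induction D with
  | id C p =>
    intro r X' G w hX' hw
    obtain ⟨v, -, h1, h2⟩ := emb_fill.1 hw
    cases h1 with | mem h1 =>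
    cases h2 with | mem h2 =>
    obtain ⟨C', hC'⟩ := hX'.focus_two (by simp) h1 h2
    exact .equiv (.id C' p) hC'
  | @andD C Y A B _ _ ih1 ih2 =>
    intro r X' G w hX' hw
    obtain ⟨v, hv, hc, hY⟩ := emb_fill.1 hw
    cases hc with
    | andL hc => exact ih1 hX' (emb_fill.2 ⟨v, hv, hc, hY⟩)
    | andR hc => exact ih2 hX' (emb_fill.2 ⟨v, hv, hc, hY⟩)
    | mem hm =>
      obtain ⟨C', hC', hr⟩ := hX'.replace hm
      obtain ⟨K1, hK1, hG1, hA⟩ := hr ((NSeq.fml A).comma .empty) (fun H w h => .andL h.1)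
      obtain ⟨K2, hK2, hG2, hB⟩ := hr ((NSeq.fml B).comma .empty) (fun H w h => .andR h.1)
      exact .equiv (.andD (ih1 hK1 (emb_fill.2 ⟨v, hv.mono hG1, hA.1, hY.mono hG1⟩))
        (ih2 hK2 (emb_fill.2 ⟨v, hv.mono hG2, hB.1, hY.mono hG2⟩)))
        ((C'.fill_congr (.unit _)).trans hC')
  | @orD C Y A B _ ih =>
    intro r X' G w hX' hw
    obtain ⟨v, hv, hc, hY⟩ := emb_fill.1 hw
    cases hc with
    | or hA hB => exact ih hX' (emb_fill.2 ⟨v, hv, hA, hB, hY⟩)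
    | mem hm =>
      obtain ⟨C', hC', hr⟩ := hX'.replace hm
      obtain ⟨K, hK, hG, hA, hB, -⟩ := hr ((NSeq.fml A).comma ((NSeq.fml B).comma .empty))
        (fun H w h => .or h.1 h.2.1)
      exact .equiv (.orD (ih hK (emb_fill.2 ⟨v, hv.mono hG, hA, hB, hY.mono hG⟩)))
        ((C'.fill_congr (.unit _)).trans hC')
  | @bboxD C A _ ih =>
    intro r X' G w hX' hw
    obtain ⟨v, hv, hc⟩ := emb_fill.1 hw
    have hc' : Cov G v (.bbox A) := hc
    cases hc' with
    | bbox he hA => exact ih hX' (emb_fill.2 ⟨v, hv, hc, _, he, hA⟩)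
    | mem hm =>
      obtain ⟨C', hC', hr⟩ := hX'.replace hm
      obtain ⟨K, hK, hG, hA⟩ := hr ((NSeq.fml (.bbox A)).comma (NSeq.fml A).black)
        (fun H w h => h.1)
      exact .equiv (.bboxD (ih hK (emb_fill.2 ⟨v, hv.mono hG, hA⟩))) hC'
  | @boxD C A _ ih =>
    intro r X' G w hX' hw
    obtain ⟨v, hv, hc⟩ := emb_fill.1 hw
    have hc' : Cov G v (.box A) := hc
    cases hc' with
    | box he hA => exact ih hX' (emb_fill.2 ⟨v, hv, hc, _, he, hA⟩)
    | mem hm =>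
      obtain ⟨C', hC', hr⟩ := hX'.replace hm
      obtain ⟨K, hK, hG, hA⟩ := hr ((NSeq.fml (.box A)).comma (NSeq.fml A).white)
        (fun H w h => h.1)
      exact .equiv (.boxD (ih hK (emb_fill.2 ⟨v, hv.mono hG, hA⟩))) hC'
  | @bdia1 C Y A _ ih =>
    intro r X' G w hX' hw
    obtain ⟨v, hv, ⟨y, he, hY⟩, hc⟩ := emb_fill.1 hw
    refine propagate hX' (d := .bd) (cov_dmdF hc) (.bwd he (.nil y)) .brefl
      fun X1 G1 h1 hG hA => ih h1 (emb_fill.2 ⟨v, hv.mono hG, ⟨y, hG.1 he, hY.mono hG, .mem hA⟩,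
        Cov.mono hG hc⟩)
  | @bdia2 C Y A _ ih =>
    intro r X' G w hX' hw
    obtain ⟨v, hv, y, he, hY, hc⟩ := emb_fill.1 hw
    refine propagate hX' (d := .bd) (cov_dmdF hc) (.bwd he (.nil v)) .brefl
      fun X1 G1 h1 hG hA => ih h1 (emb_fill.2 ⟨v, hv.mono hG,
        ⟨y, hG.1 he, hY.mono hG, Cov.mono hG hc⟩, .mem hA⟩)
  | @dia1 C Y A _ ih =>
    intro r X' G w hX' hw
    obtain ⟨v, hv, ⟨y, he, hY⟩, hc⟩ := emb_fill.1 hw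
    refine propagate hX' (d := .wd) (cov_dmdF hc) (.fwd he (.nil y)) .wrefl
      fun X1 G1 h1 hG hA => ih h1 (emb_fill.2 ⟨v, hv.mono hG, ⟨y, hG.1 he, hY.mono hG, .mem hA⟩,
        Cov.mono hG hc⟩)
  | @dia2 C Y A _ ih =>
    intro r X' G w hX' hw
    obtain ⟨v, hv, y, he, hY, hc⟩ := emb_fill.1 hw
    refine propagate hX' (d := .wd) (cov_dmdF hc) (.fwd he (.nil v)) .wrefl
      fun X1 G1 h1 hG hA => ih h1 (emb_fill.2 ⟨v, hv.mono hG,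
        ⟨y, hG.1 he, hY.mono hG, Cov.mono hG hc⟩, .mem hA⟩)
  | @ext X Y hXY _ ih =>
    intro r X' G w hX' hw
    obtain ⟨s, H, u, v, A, d, Pi, hX, hp, hPi, hu, hv, hY⟩ := hXY
    obtain ⟨f, rfl, hE, hL⟩ := hY.exists_hom hw
    -- The principal formula survives the erasure even when `u = v`.
    have hu' : Cov G (f u) (dmdF d A) := by
      apply hL
      dsimp only
      split_ifs with huv
      · subst huv
        exact (Multiset.mem_erase_of_ne (dmdF_ne d A)).2 hu
      · exact hu
    refine propagate hX' (cov_dmdF hu') (hp.map hE) hPi fun X1 G1 h1 hG hA => ?_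
    refine ih h1 (hX.emb (fun a b hab => hG.1 (hE a b hab)) fun z B hB => ?_)
    by_cases hzB : z = v ∧ B = A
    · obtain ⟨rfl, rfl⟩ := hzB
      exact .mem hA
    · refine (hL z B ?_).mono hG
      dsimp only
      split_ifs with hz
      · subst hz
        exact (Multiset.mem_erase_of_ne (fun h => hzB ⟨rfl, h⟩)).2 hB
      · exact hB
  | equiv _ hXY ih =>
    intro r X' G w hX' hw
    exact ih hX' ((emb_equiv hXY w).2 hw)

/-- A rule is admissible as soon as every homomorphism from its conclusion into a graph yields one
from its premise, possibly with another image of the root. -/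
theorem DKT.admissible {P : Set PathAx} {X X' : NSeq}
    (h : ∀ G w, Emb G X' w → ∃ v, Emb G X v) (D : DKT (DeepPrL P) X) : DKT (DeepPrL P) X' := by
  obtain ⟨G, hG, -⟩ := LabT.exists_avoiding X' 0 ∅
  obtain ⟨v, hv⟩ := h G 0 (hG.emb (f := fun z => z) (fun _ _ hab => hab) fun _ _ hA => .mem hA)
  exact D.of_emb hG hv

/-- Lemma `dktstrucadmiss`: weakening, contraction, and the
    display rules (rf) and (rp) are admissible in `DKT + DeepPr(P)`. -/
theorem dkt_structural_admissibility (P : Set PathAx) :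
    -- weakening: from X[Y] infer X[Y, Z]
    (∀ (C : Ctx) (Y Z : NSeq),
      DKT (DeepPrL P) (C.fill Y) → DKT (DeepPrL P) (C.fill (Y.comma Z))) ∧
    -- contraction: from X[Y, Y] infer X[Y]
    (∀ (C : Ctx) (Y : NSeq),
      DKT (DeepPrL P) (C.fill (Y.comma Y)) → DKT (DeepPrL P) (C.fill Y)) ∧
    -- (rf): from X, ∘{Y} infer •{X}, Y
    (∀ X Y : NSeq,
      DKT (DeepPrL P) (X.comma Y.white) → DKT (DeepPrL P) (X.black.comma Y)) ∧
    -- (rp): from X, •{Y} infer ∘{X}, Y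
    (∀ X Y : NSeq,
      DKT (DeepPrL P) (X.comma Y.black) → DKT (DeepPrL P) (X.white.comma Y)) := by
  refine ⟨fun C Y Z => ?_, fun C Y => ?_, fun X Y => ?_, fun X Y => ?_⟩ <;>
    refine DKT.admissible fun G w hw => ?_
  · obtain ⟨v, hv, hY, -⟩ := emb_fill.1 hw
    exact ⟨w, emb_fill.2 ⟨v, hv, hY⟩⟩
  · obtain ⟨v, hv, hY⟩ := emb_fill.1 hw
    exact ⟨w, emb_fill.2 ⟨v, hv, hY, hY⟩⟩
  · obtain ⟨⟨v, he, hX⟩, hY⟩ := hw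
    exact ⟨v, hX, w, he, hY⟩
  · obtain ⟨⟨v, he, hX⟩, hY⟩ := hw
    exact ⟨v, hX, w, he, hY⟩
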